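/- The power formula for prestressing strand stress (before capping at f_pu), f_ps(ε) = E_ps·ε·[Q + (1 − Q)/(1 + (E_ps·ε/(K·f_py))^N)^{1/N}], satisfies: (i) f_ps is strictly increasing on [0, ∞); and (ii) f_ps(ε) ≤ E_ps·ε for all ε ≥ 0, with equality only at ε = 0. In particular, for (i), its derivative with respect to the normalized variable t = E_ps·ε/(K·f_py) equals K·f_py·[Q + (1 − Q)·(1 + t^N)^{−(1 + 1/N)}] > 0 for all t ≥ 0. -/

import Mathlib

/-!
Measuring stress in units of `K * fpy`, the model is the convex combination
`Q * t + (1 - Q) * s t` with `s t = t / (1 + t ^ N) ^ (1 / N)`. Differentiating the quotient, the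
terms in `t ^ N` cancel and leave `s' t = (1 + t ^ N) ^ (-(1 + 1 / N)) > 0`, which gives the
monotonicity. The denominator of `s` exceeds `1` for `t > 0`, so `s t < t` there.
-/

/-- The saturation curve with exponent `p`, which starts from `0` with unit slope: the yielding part
of the dimensionless strand response. -/
noncomputable def rpowSaturation (p t : ℝ) : ℝ :=
  t / (1 + t ^ p) ^ (1 / p)

/-- The Mattock stress–strain law in dimensionless form, with `t = Eps * ε / (K * fpy)` and the
stress measured in units of `K * fpy`: a fraction `Q` of linear hardening and a fraction `1 - Q` of
saturation. -/
noncomputable def mattockCurve (Q p t : ℝ) : ℝ :=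
  Q * t + (1 - Q) * rpowSaturation p t

theorem hasDerivAt_zero_id_mul {𝕜 : Type*} [NontriviallyNormedField 𝕜] {f : 𝕜 → 𝕜}
    (hf : ContinuousAt f 0) : HasDerivAt (fun x => x * f x) (f 0) 0 := by
  rw [hasDerivAt_iff_tendsto_slope]
  refine (hf.tendsto.mono_left nhdsWithin_le_nhds).congr' ?_
  filter_upwards [self_mem_nhdsWithin] with x (hx : x ≠ 0)
  simp [slope_def_field, hx]

section Saturation

variable {p t : ℝ}

-- For `p < 1` the quotient rule does not apply at `0`, where `t ^ p` has no derivative.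
theorem hasDerivAt_rpowSaturation_zero (hp : 0 < p) : HasDerivAt (rpowSaturation p) 1 0 := by
  have base_cont : ContinuousAt (fun x : ℝ => 1 + x ^ p) 0 :=
    continuousAt_const.add (Real.continuousAt_rpow_const 0 p (.inr hp.le))
  have denom_zero : (1 + (0 : ℝ) ^ p) ^ (1 / p) = 1 := by
    rw [Real.zero_rpow hp.ne', add_zero, Real.one_rpow]
  have inv_denom_cont : ContinuousAt (fun x : ℝ => ((1 + x ^ p) ^ (1 / p))⁻¹) 0 :=
    (base_cont.rpow_const (.inr (one_div_pos.2 hp).le)).inv₀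
      (denom_zero.trans_ne one_ne_zero)
  exact (hasDerivAt_zero_id_mul inv_denom_cont).congr_deriv (by rw [denom_zero, inv_one])

theorem hasDerivAt_rpowSaturation_of_pos (hp : p ≠ 0) (ht : 0 < t) :
    HasDerivAt (rpowSaturation p) ((1 + t ^ p) ^ (-(1 + 1 / p))) t := by
  have base_pos : 0 < 1 + t ^ p := by positivity
  have denom_pos : 0 < (1 + t ^ p) ^ (1 / p) := Real.rpow_pos_of_pos base_pos _
  have base_deriv : HasDerivAt (fun x : ℝ => 1 + x ^ p) (p * t ^ (p - 1)) t :=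
    (Real.hasDerivAt_rpow_const (.inl ht.ne')).const_add 1
  have denom_deriv : HasDerivAt (fun x : ℝ => (1 + x ^ p) ^ (1 / p))
      (t ^ p / t * ((1 + t ^ p) ^ (1 / p) / (1 + t ^ p))) t := by
    refine (base_deriv.rpow_const (.inl base_pos.ne')).congr_deriv ?_
    rw [Real.rpow_sub_one ht.ne', Real.rpow_sub_one base_pos.ne']
    field_simp
  have target_eq :
      (1 + t ^ p) ^ (-(1 + 1 / p)) = ((1 + t ^ p) * (1 + t ^ p) ^ (1 / p))⁻¹ := by
    rw [Real.rpow_neg base_pos.le, Real.rpow_add base_pos, Real.rpow_one]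
  refine ((hasDerivAt_id t).div denom_deriv denom_pos.ne').congr_deriv ?_
  rw [target_eq, id_eq]
  field_simp
  ring

theorem hasDerivAt_rpowSaturation (hp : 0 < p) (ht : 0 ≤ t) :
    HasDerivAt (rpowSaturation p) ((1 + t ^ p) ^ (-(1 + 1 / p))) t := by
  rcases ht.eq_or_lt with rfl | ht
  · simpa [Real.zero_rpow hp.ne'] using hasDerivAt_rpowSaturation_zero hp
  · exact hasDerivAt_rpowSaturation_of_pos hp.ne' ht

theorem rpowSaturation_le_self (hp : 0 ≤ p) (ht : 0 ≤ t) : rpowSaturation p t ≤ t :=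
  div_le_self ht <| Real.one_le_rpow (le_add_of_nonneg_right (Real.rpow_nonneg ht p))
    (one_div_nonneg.2 hp)

theorem rpowSaturation_lt_self (hp : 0 < p) (ht : 0 < t) : rpowSaturation p t < t :=
  div_lt_self ht <| Real.one_lt_rpow (lt_add_of_pos_right 1 (Real.rpow_pos_of_pos ht p))
    (one_div_pos.2 hp)

end Saturation

section Mattock

variable {Q p t : ℝ}

theorem mattockCurve_eq_mul (Q p t : ℝ) :
    mattockCurve Q p t = t * (Q + (1 - Q) / (1 + t ^ p) ^ (1 / p)) := by
  rw [mattockCurve, rpowSaturation]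
  ring

theorem hasDerivAt_mattockCurve (hp : 0 < p) (ht : 0 ≤ t) :
    HasDerivAt (mattockCurve Q p) (Q + (1 - Q) * (1 + t ^ p) ^ (-(1 + 1 / p))) t :=
  (hasDerivAt_const_mul Q).add ((hasDerivAt_rpowSaturation hp ht).const_mul (1 - Q))

theorem mattockCurve_deriv_pos (hQ0 : 0 ≤ Q) (hQ1 : Q < 1) (ht : 0 ≤ t) :
    0 < Q + (1 - Q) * (1 + t ^ p) ^ (-(1 + 1 / p)) := by
  have : 0 < 1 - Q := sub_pos.2 hQ1
  positivity

theorem strictMonoOn_mattockCurve (hQ0 : 0 ≤ Q) (hQ1 : Q < 1) (hp : 0 < p) :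
    StrictMonoOn (mattockCurve Q p) (Set.Ici 0) :=
  strictMonoOn_of_hasDerivWithinAt_pos (convex_Ici 0)
    (fun _ ht => (hasDerivAt_mattockCurve hp ht).continuousAt.continuousWithinAt)
    (fun _ ht => (hasDerivAt_mattockCurve hp (interior_subset ht)).hasDerivWithinAt)
    (fun _ ht => mattockCurve_deriv_pos hQ0 hQ1 (interior_subset ht))

theorem mattockCurve_le_self (hQ1 : Q ≤ 1) (hp : 0 ≤ p) (ht : 0 ≤ t) :
    mattockCurve Q p t ≤ t :=
  calc mattockCurve Q p t ≤ Q * t + (1 - Q) * t := by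
        unfold mattockCurve
        have := sub_nonneg.2 hQ1
        gcongr
        exact rpowSaturation_le_self hp ht
    _ = t := by ring

theorem mattockCurve_lt_self (hQ1 : Q < 1) (hp : 0 < p) (ht : 0 < t) :
    mattockCurve Q p t < t :=
  calc mattockCurve Q p t < Q * t + (1 - Q) * t := by
        unfold mattockCurve
        have := sub_pos.2 hQ1
        gcongr
        exact rpowSaturation_lt_self hp ht
    _ = t := by ring

theorem eq_zero_of_mattockCurve_eq_self (hQ1 : Q < 1) (hp : 0 < p) (ht : 0 ≤ t)
    (h : mattockCurve Q p t = t) : t = 0 :=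
  by_contra fun ht0 => (mattockCurve_lt_self hQ1 hp (ht.lt_of_ne' ht0)).ne h

end Mattock

/-- The Mattock power formula for prestressing strand stress (before
capping at `f_pu`) is strictly increasing on `[0, ∞)`, is bounded above by `E_ps·ε`
with equality only at `ε = 0`, and in the normalized variable `t = E_ps·ε/(K·f_py)`
has derivative `K·f_py·(Q + (1 − Q)·(1 + t^N)^{−(1 + 1/N)}) > 0` for all `t ≥ 0`. -/
theorem mattock_strand_model_properties
    (Eps fpy K Q N : ℝ)
    (hEps : 0 < Eps) (hfpy : 0 < fpy) (hK : 0 < K)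
    (hQ0 : 0 < Q) (hQ1 : Q < 1) (hN : 0 < N) :
    let fps : ℝ → ℝ := fun ε =>
      Eps * ε * (Q + (1 - Q) / (1 + (Eps * ε / (K * fpy)) ^ N) ^ (1 / N))
    let F : ℝ → ℝ := fun t =>
      K * fpy * t * (Q + (1 - Q) / (1 + t ^ N) ^ (1 / N))
    StrictMonoOn fps (Set.Ici 0) ∧
      (∀ ε : ℝ, 0 ≤ ε → fps ε ≤ Eps * ε) ∧
      (∀ ε : ℝ, 0 ≤ ε → fps ε = Eps * ε → ε = 0) ∧
      (∀ t : ℝ, 0 ≤ t →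
        HasDerivAt F (K * fpy * (Q + (1 - Q) * (1 + t ^ N) ^ (-(1 + 1 / N)))) t ∧
          0 < K * fpy * (Q + (1 - Q) * (1 + t ^ N) ^ (-(1 + 1 / N)))) := by
  intro fps F
  have hc : 0 < K * fpy := mul_pos hK hfpy
  have F_eq : F = fun t => K * fpy * mattockCurve Q N t := by
    simp only [F, mattockCurve_eq_mul, mul_assoc]
  have strain_eq (ε : ℝ) : K * fpy * (Eps / (K * fpy) * ε) = Eps * ε := by field_simp
  have fps_eq (ε : ℝ) : fps ε = K * fpy * mattockCurve Q N (Eps / (K * fpy) * ε) := by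
    rw [mattockCurve_eq_mul, ← mul_assoc, strain_eq, div_mul_eq_mul_div]
  have hEc : 0 < Eps / (K * fpy) := div_pos hEps hc
  refine ⟨fun a ha b hb hab => ?_, fun ε hε => ?_, fun ε hε h => ?_, fun t ht => ⟨?_, ?_⟩⟩
  · rw [fps_eq, fps_eq]
    exact mul_lt_mul_of_pos_left (strictMonoOn_mattockCurve hQ0.le hQ1 hN
      (mul_nonneg hEc.le ha) (mul_nonneg hEc.le hb) (mul_lt_mul_of_pos_left hab hEc)) hc
  · rw [fps_eq, ← strain_eq]
    exact mul_le_mul_of_nonneg_left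
      (mattockCurve_le_self hQ1.le hN.le (mul_nonneg hEc.le hε)) hc.le
  · rw [fps_eq, ← strain_eq, mul_right_inj' hc.ne'] at h
    exact (mul_eq_zero_iff_left hEc.ne').1
      (eq_zero_of_mattockCurve_eq_self hQ1 hN (mul_nonneg hEc.le hε) h)
  · exact F_eq ▸ (hasDerivAt_mattockCurve hN ht).const_mul (K * fpy)
  · exact mul_pos hc (mattockCurve_deriv_pos hQ0.le hQ1 ht)
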